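/- Suppose that for every β > 0 eigen-data (P(β), H_β, ν_β) for (α,β) is given, with each H_β locally ring-constant. Then, as β → +∞: if α > 1, e^β·H_β(0^∞)/H_β(1^∞) → 1; if α = 1, e^β·H_β(0^∞)/H_β(1^∞) → (1+√5)/2; and if 0 < α < 1, e^β·H_β(0^∞)/H_β(1^∞) → +∞. -/

import Mathlib

/-!
Write `λ = e^P`. On the rings the eigen-equation is an affine recursion whose inhomogeneous term
involves only the first ring around the other fixed point and the cylinder `[2]`. With
`A = e^{-β/2} H[0*]`, `B = e^{-3β/2} H[1*]`, `C = e^{-αβ} H[2]`, a bounded solution of that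
recursion is given by a series (`series_of_recursion`), and the whole eigen-equation collapses
(`exists_scalars`) to

* `λ e^β A = (B + C) F(P, β)`, `λ e^{3β} B = (A + C) F(P, 3β)`, `(λ e^{αβ} - 1) C = A + B`,
* `(λ - 1) H(0^∞) = B + C`, `(λ - 1) H(1^∞) = A + C`.

Put `x = F(P, β) / (λ e^{2β})`, `y = F(P, 3β) / (λ e^{2β})`, `g = 1 / (λ e^{αβ} - 1)`. Eliminating
`A, B, C` (`characteristic`) gives

`x y + g (x e^β + y e^{-β}) + 2 g x y = 1`  and
`e^β H(0^∞) / H(1^∞) = (1 + y e^{-β}) / (e^{-β} + x)`.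

The difference `F(P, 3β) - F(P, β)` is at most `3 β e^{3β/2}` uniformly in `P` (`Ffun_le_add`), so
`0 ≤ y - x ≤ 3 β e^{-β/2} → 0`, while `g → 0`. Hence `x² + (g e^β) x → 1` (`tendsto_quadratic`).
If `α > 1` then `g e^β → 0` and `x → 1`. If `α = 1` then `λ → 1`, so `g e^β → 1` and `x` tends to
the positive root `(√5 - 1) / 2` of `r² + r = 1`. In both cases the ratio tends to the inverse of
the limit of `x` (`tendsto_ratio`). If `α < 1`, the term `g x e^β ≤ 1` together with `λ ≤ 3` gives
`x e^β ≤ 3 e^{αβ}`, and the ratio is at least `e^{(1-α)β} / 4`.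
-/


open MeasureTheory Filter Topology

noncomputable section

/-- The full shift space `Σ = {0,1,2}^ℕ`. -/
abbrev Sig : Type := ℕ → Fin 3

/-- The shift map `σ`. -/
def shift (x : Sig) : Sig := fun n => x (n + 1)

/-- The fixed point `0^∞`. -/
def zeroSeq : Sig := fun _ => 0

/-- The fixed point `1^∞`. -/
def oneSeq : Sig := fun _ => 1

/-- Prepending a symbol: `a·x = (a, x₀, x₁, …)`. -/
def cons (a : Fin 3) (x : Sig) : Sig := fun n => Nat.casesOn n a x

open Classical in
/-- The metric `d(x,y) = (1/2)^(min{n : x n ≠ y n})`, with `d(x,x) = 0`. -/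
def dist3 (x y : Sig) : ℝ :=
  if h : x ≠ y then (1 / 2 : ℝ) ^ Nat.find (Function.ne_iff.mp h) else 0

/-- The potential `A_α`. -/
def pot (α : ℝ) (x : Sig) : ℝ :=
  if x 0 = 0 then -dist3 x zeroSeq
  else if x 0 = 1 then -(3 * dist3 x oneSeq)
  else -α

/-- The transfer operator `L_β` (for parameter `α`). -/
def transfer (α β : ℝ) (f : Sig → ℝ) : Sig → ℝ :=
  fun x => ∑ a : Fin 3, Real.exp (β * pot α (cons a x)) * f (cons a x)

/-- The ring `[a^n *_a] = {x : x_i = a for i < n, x_n ≠ a}`. -/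
def ringSet (a : Fin 3) (n : ℕ) : Set Sig := {x | (∀ i < n, x i = a) ∧ x n ≠ a}

/-- The cylinder `[a] = {x : x₀ = a}`. -/
def cyl (a : Fin 3) : Set Sig := {x | x 0 = a}

/-- `H` is locally ring-constant: constant on `[2]` and on each ring `[0^m*₀]`, `[1^m*₁]`. -/
def LocallyRingConstant (H : Sig → ℝ) : Prop :=
  (∀ x ∈ cyl 2, ∀ y ∈ cyl 2, H x = H y) ∧
  (∀ m : ℕ, 1 ≤ m → ∀ x ∈ ringSet 0 m, ∀ y ∈ ringSet 0 m, H x = H y) ∧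
  (∀ m : ℕ, 1 ≤ m → ∀ x ∈ ringSet 1 m, ∀ y ∈ ringSet 1 m, H x = H y)

/-- An eigen-measure for `(α,β)` with exponent `P`:  a Borel probability measure `ν`
with `P > 0` and `∫ L_β f dν = e^P ∫ f dν` for every continuous `f`. -/
structure IsEigenMeasure (α β P : ℝ) (ν : Measure Sig) : Prop where
  P_pos : 0 < P
  prob : IsProbabilityMeasure ν
  eigenMeas : ∀ f : Sig → ℝ, Continuous f →
    ∫ x, transfer α β f x ∂ν = Real.exp P * ∫ x, f x ∂ν

/-- Eigen-data `(P, H, ν)` for `(α,β)`. -/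
structure IsEigenData (α β P : ℝ) (H : Sig → ℝ) (ν : Measure Sig) : Prop where
  P_pos : 0 < P
  H_cont : Continuous H
  H_pos : ∀ x, 0 < H x
  eigenFun : ∀ x, transfer α β H x = Real.exp P * H x
  prob : IsProbabilityMeasure ν
  eigenMeas : ∀ f : Sig → ℝ, Continuous f →
    ∫ x, transfer α β f x ∂ν = Real.exp P * ∫ x, f x ∂ν

/-- The Gibbs measure `μ(B) = (∫_B H dν)/(∫ H dν)`. -/
def gibbs (H : Sig → ℝ) (ν : Measure Sig) : Measure Sig :=
  (ν.withDensity (fun x => ENNReal.ofReal (H x)) Set.univ)⁻¹ •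
    ν.withDensity (fun x => ENNReal.ofReal (H x))

/-- Weak convergence (as `β → +∞`) of a family of measures to a measure `μ∞`:
convergence of integrals of every bounded continuous function. -/
def WeakLimit (μ : ℝ → Measure Sig) (μlim : Measure Sig) : Prop :=
  ∀ f : Sig → ℝ, Continuous f → (∃ C : ℝ, ∀ x, |f x| ≤ C) →
    Tendsto (fun β => ∫ x, f x ∂(μ β)) atTop (nhds (∫ x, f x ∂μlim))

/-- `F(Z,β) = Σ_{k=0}^∞ e^{−kZ}·e^{β/2^{k+1}}`. -/
def Ffun (Z β : ℝ) : ℝ := ∑' k : ℕ, Real.exp (-(k : ℝ) * Z) * Real.exp (β / 2 ^ (k + 1))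

/-- `Fpartial Z β m = F_{m-1}(Z,β) = Σ_{k=0}^{m-1} e^{−kZ}·e^{β/2^{k+1}}` (so `Fpartial Z β 0 = F_{-1} = 0`). -/
def Fpartial (Z β : ℝ) (m : ℕ) : ℝ :=
  ∑ k ∈ Finset.range m, Real.exp (-(k : ℝ) * Z) * Real.exp (β / 2 ^ (k + 1))

/-! ### Ring points and the potential -/

/-- The point `a^m 2^∞`; it lies in the ring `[a^m *_a]` when `a ≠ 2`. -/
def ringPt (a : Fin 3) (m : ℕ) : Sig := fun i => if i < m then a else 2

lemma cons_ringPt (a : Fin 3) (m : ℕ) : cons a (ringPt a m) = ringPt a (m + 1) := by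
  funext i
  cases i <;> simp [cons, ringPt]

lemma ringPt_mem {a : Fin 3} (ha : a ≠ 2) (m : ℕ) : ringPt a m ∈ ringSet a m := by
  refine ⟨fun i hi => by simp [ringPt, hi], ?_⟩
  simpa [ringPt] using ha.symm

lemma cons_mem_ringSet_one {a : Fin 3} {x : Sig} (h : x 0 ≠ a) : cons a x ∈ ringSet a 1 := by
  refine ⟨fun i hi => ?_, h⟩
  obtain rfl : i = 0 := by omega
  rfl

lemma dist3_const_of_mem {a : Fin 3} {m : ℕ} {x : Sig} (hx : x ∈ ringSet a m) :
    dist3 x (fun _ => a) = (1 / 2 : ℝ) ^ m := by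
  have hne : x ≠ (fun _ => a) := fun h => hx.2 (by rw [h])
  rw [dist3, dif_pos hne]
  congr 1
  rw [Nat.find_eq_iff]
  exact ⟨hx.2, fun n hn => by simpa using hx.1 n hn⟩

lemma pot_ring_zero (α : ℝ) {m : ℕ} {x : Sig} (hm : 1 ≤ m) (hx : x ∈ ringSet 0 m) :
    pot α x = -(1 / 2 : ℝ) ^ m := by
  have h0 : x 0 = 0 := hx.1 0 hm
  rw [pot, if_pos h0]
  exact congrArg Neg.neg (dist3_const_of_mem hx)

lemma pot_ring_one (α : ℝ) {m : ℕ} {x : Sig} (hm : 1 ≤ m) (hx : x ∈ ringSet 1 m) :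
    pot α x = -(3 * (1 / 2 : ℝ) ^ m) := by
  have h0 : x 0 = 1 := hx.1 0 hm
  rw [pot, if_neg (by rw [h0]; decide), if_pos h0]
  exact congrArg (fun t => -(3 * t)) (dist3_const_of_mem hx)

lemma pot_cons_two (α : ℝ) (x : Sig) : pot α (cons 2 x) = -α := by
  simp [pot, cons]

lemma dist3_nonneg (x y : Sig) : 0 ≤ dist3 x y := by
  unfold dist3
  split_ifs <;> positivity

lemma pot_nonpos {α : ℝ} (hα : 0 ≤ α) (x : Sig) : pot α x ≤ 0 := by
  have h0 := dist3_nonneg x zeroSeq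
  have h1 := dist3_nonneg x oneSeq
  unfold pot
  split_ifs <;> linarith

lemma cons_zeroSeq : cons 0 zeroSeq = zeroSeq := by
  funext i
  cases i <;> rfl

lemma cons_oneSeq : cons 1 oneSeq = oneSeq := by
  funext i
  cases i <;> rfl

lemma pot_zeroSeq (α : ℝ) : pot α zeroSeq = 0 := by
  simp [pot, dist3, zeroSeq]

lemma pot_oneSeq (α : ℝ) : pot α oneSeq = 0 := by
  simp [pot, dist3, oneSeq]

lemma transfer_apply (α β : ℝ) (f : Sig → ℝ) (x : Sig) :
    transfer α β f x = Real.exp (β * pot α (cons 0 x)) * f (cons 0 x)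
      + Real.exp (β * pot α (cons 1 x)) * f (cons 1 x)
      + Real.exp (β * pot α (cons 2 x)) * f (cons 2 x) := by
  simp [transfer, Fin.sum_univ_three]

/-! ### The series `F(Z, b)` -/

lemma Ffun_summable {Z b : ℝ} (hZ : 0 < Z) (hb : 0 ≤ b) :
    Summable fun k : ℕ => Real.exp (-(k : ℝ) * Z) * Real.exp (b / 2 ^ (k + 1)) := by
  have hg : Summable fun k : ℕ => Real.exp (-Z) ^ k * Real.exp b :=
    (summable_geometric_of_lt_one (Real.exp_pos _).le (by simpa using hZ)).mul_right _
  refine hg.of_nonneg_of_le (fun k => by positivity) (fun k => ?_)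
  rw [← Real.exp_nat_mul]
  have h1 : b / 2 ^ (k + 1) ≤ b := div_le_self hb (one_le_pow₀ (by norm_num))
  have h2 : -(k : ℝ) * Z = (k : ℝ) * -Z := by ring
  rw [h2]
  gcongr

lemma Ffun_mono {Z b c : ℝ} (hZ : 0 < Z) (hb : 0 ≤ b) (hbc : b ≤ c) : Ffun Z b ≤ Ffun Z c := by
  refine (Ffun_summable hZ hb).tsum_le_tsum (fun k => ?_) (Ffun_summable hZ (hb.trans hbc))
  gcongr

/-- The excess of `F(Z, c)` over `F(Z, b)` is bounded uniformly in `Z`, from `e^t - 1 ≤ t e^t`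
applied termwise and `∑ 2^{-(k+1)} = 1`. -/
lemma Ffun_le_add {Z b c : ℝ} (hZ : 0 < Z) (hb : 0 ≤ b) (hbc : b ≤ c) :
    Ffun Z c ≤ Ffun Z b + c * Real.exp (c / 2) := by
  have hc := hb.trans hbc
  have hgeo : HasSum (fun k : ℕ => c * Real.exp (c / 2) * (1 / 2 : ℝ) ^ (k + 1))
      (c * Real.exp (c / 2)) := by
    have h := (hasSum_geometric_two.mul_left (1 / 2 : ℝ)).mul_left (c * Real.exp (c / 2))
    rw [show (1 / 2 : ℝ) * 2 = 1 by norm_num, mul_one] at h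
    simpa only [pow_succ'] using h
  have hs := (Ffun_summable hZ hb).hasSum.add hgeo
  refine hasSum_le (fun k => ?_) (Ffun_summable hZ hc).hasSum hs
  have hp : (0 : ℝ) < 2 ^ (k + 1) := by positivity
  have hw : Real.exp (-(k : ℝ) * Z) ≤ 1 := by
    rw [Real.exp_le_one_iff]
    have : 0 ≤ (k : ℝ) * Z := by positivity
    linarith
  have hbk : 1 ≤ Real.exp (b / 2 ^ (k + 1)) := Real.one_le_exp (by positivity)
  have hck : Real.exp (c / 2 ^ (k + 1)) ≤ Real.exp (c / 2) := by
    refine Real.exp_le_exp.2 (div_le_div_of_nonneg_left hc (by norm_num) ?_)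
    rw [pow_succ]
    nlinarith [one_le_pow₀ (n := k) (by norm_num : (1 : ℝ) ≤ 2)]
  have hck' : Real.exp (c / 2 ^ (k + 1)) - 1
      ≤ c / 2 ^ (k + 1) * Real.exp (c / 2 ^ (k + 1)) := by
    have h := Real.add_one_le_exp (-(c / 2 ^ (k + 1)))
    have h2 : Real.exp (-(c / 2 ^ (k + 1))) * Real.exp (c / 2 ^ (k + 1)) = 1 := by
      rw [← Real.exp_add]; simp
    nlinarith [Real.exp_pos (c / 2 ^ (k + 1))]
  have hprod : c / 2 ^ (k + 1) * Real.exp (c / 2 ^ (k + 1))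
      ≤ c * Real.exp (c / 2) * (1 / 2 : ℝ) ^ (k + 1) := by
    have h : c / 2 ^ (k + 1) * Real.exp (c / 2) = c * Real.exp (c / 2) * (1 / 2 : ℝ) ^ (k + 1) := by
      rw [one_div, inv_pow]; field_simp
    rw [← h]
    gcongr
  have hwpos := Real.exp_pos (-(k : ℝ) * Z)
  have hD : 0 ≤ c * Real.exp (c / 2) * (1 / 2 : ℝ) ^ (k + 1) := by positivity
  have hdiff : Real.exp (c / 2 ^ (k + 1)) - Real.exp (b / 2 ^ (k + 1))
      ≤ c * Real.exp (c / 2) * (1 / 2 : ℝ) ^ (k + 1) := by linarith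
  nlinarith [mul_le_mul_of_nonneg_left hdiff hwpos.le, mul_le_mul_of_nonneg_right hw hD]

lemma Ffun_zero {Z : ℝ} (hZ : 0 < Z) : Ffun Z 0 * (Real.exp Z - 1) = Real.exp Z := by
  have h : Ffun Z 0 = (1 - Real.exp (-Z))⁻¹ := by
    rw [← tsum_geometric_of_lt_one (Real.exp_pos _).le (by simpa using hZ)]
    refine tsum_congr fun k => ?_
    rw [← Real.exp_nat_mul]
    simp
  have h1 : 1 < Real.exp Z := by simpa using hZ
  rw [h, Real.exp_neg]
  have h3 : Real.exp Z - 1 ≠ 0 := by linarith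
  field_simp

/-- A bounded solution of the affine recursion satisfied by the values of an eigenfunction on the
rings around a fixed point has its first term determined by the series `F`. -/
lemma series_of_recursion {Z b K M : ℝ} {a : ℕ → ℝ} (hZ : 0 < Z) (hb : 0 ≤ b)
    (ha : ∀ k, |a k| ≤ M)
    (hrec : ∀ k, Real.exp Z * a k = Real.exp (-(b / 2 ^ (k + 2))) * a (k + 1) + K) :
    Real.exp Z * Real.exp (b / 2) * a 0 = K * Ffun Z b := by
  set t : ℕ → ℝ := fun k => Real.exp (-(k : ℝ) * Z) * Real.exp (b / 2 ^ (k + 1)) with ht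
  have hpart : ∀ n, K * ∑ k ∈ Finset.range n, t k + Real.exp Z * (t n * a n)
      = Real.exp Z * Real.exp (b / 2) * a 0 := by
    intro n
    induction n with
    | zero => simp [ht]; ring
    | succ n ih =>
      rw [← ih, Finset.sum_range_succ]
      have hstep : Real.exp Z * t (n + 1) = t n * Real.exp (-(b / 2 ^ (n + 2))) := by
        simp only [ht, ← Real.exp_add]
        congr 1
        push_cast
        field_simp
        ring
      linear_combination a (n + 1) * hstep - t n * hrec n
  have hsum := Ffun_summable hZ hb
  have hrem : Tendsto (fun n => t n * a n) atTop (𝓝 0) := by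
    have h0 : Tendsto (fun n => t n * M) atTop (𝓝 0) := by
      have h := hsum.tendsto_atTop_zero.mul_const M
      rwa [zero_mul] at h
    refine squeeze_zero_norm (fun n => ?_) h0
    rw [norm_mul, Real.norm_eq_abs, Real.norm_eq_abs, abs_of_pos (by simp only [ht]; positivity)]
    exact mul_le_mul_of_nonneg_left (ha n) (by simp only [ht]; positivity)
  have hlim := (hsum.hasSum.tendsto_sum_nat.const_mul K).add (hrem.const_mul (Real.exp Z))
  rw [mul_zero, add_zero] at hlim
  exact tendsto_nhds_unique (tendsto_const_nhds.congr fun n => (hpart n).symm) hlim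

/-! ### Reduction of the eigen-equation to three scalars -/

/-- The eigen-equation at ring points and at the two fixed points, in terms of
`A = e^{-β/2} H[0*]`, `B = e^{-3β/2} H[1*]` and `C = e^{-αβ} H[2]`. The infinitely many values of
`H` on the rings are summed into `F(P, β)` and `F(P, 3β)`. The bound `e^P ≤ 3` comes from the
eigen-equation at a maximum point of `H`, as the potential is nonpositive. -/
lemma exists_scalars {α β P : ℝ} {H : Sig → ℝ} {ν : Measure Sig} (hα : 0 < α) (hβ : 0 < β)
    (hE : IsEigenData α β P H ν) (hRC : LocallyRingConstant H) :
    Real.exp P ≤ 3 ∧ ∃ A B C : ℝ, 0 < A ∧ 0 < B ∧ 0 < C ∧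
      Real.exp P * Real.exp β * A = (B + C) * Ffun P β ∧
      Real.exp P * Real.exp (3 * β) * B = (A + C) * Ffun P (3 * β) ∧
      (Real.exp P * Real.exp (α * β) - 1) * C = A + B ∧
      (Real.exp P - 1) * H zeroSeq = B + C ∧
      (Real.exp P - 1) * H oneSeq = A + C := by
  obtain ⟨p, -, hp⟩ := isCompact_univ.exists_isMaxOn Set.univ_nonempty hE.H_cont.continuousOn
  have hmax : ∀ x, H x ≤ H p := fun x => hp (Set.mem_univ x)
  have hbd : ∀ x, |H x| ≤ H p := fun x => by rw [abs_of_pos (hE.H_pos x)]; exact hmax x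
  obtain ⟨h2, h0, h1⟩ := hRC
  set A := Real.exp (-(β / 2)) * H (ringPt 0 1) with hA
  set B := Real.exp (-(3 * β / 2)) * H (ringPt 1 1) with hB
  set C := Real.exp (-(α * β)) * H (ringPt 0 0) with hC
  have hPos := hE.H_pos
  -- The contribution of the branch `a` at a point not starting with `a`.
  have br0 : ∀ x : Sig, x 0 ≠ 0 →
      Real.exp (β * pot α (cons 0 x)) * H (cons 0 x) = A := by
    intro x hx
    have hm := cons_mem_ringSet_one hx
    rw [pot_ring_zero α le_rfl hm,
      h0 1 le_rfl _ hm _ (ringPt_mem (a := 0) (by decide) 1), hA]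
    congr 2; ring
  have br1 : ∀ x : Sig, x 0 ≠ 1 →
      Real.exp (β * pot α (cons 1 x)) * H (cons 1 x) = B := by
    intro x hx
    have hm := cons_mem_ringSet_one hx
    rw [pot_ring_one α le_rfl hm,
      h1 1 le_rfl _ hm _ (ringPt_mem (a := 1) (by decide) 1), hB]
    congr 2; ring
  have br2 : ∀ x : Sig, Real.exp (β * pot α (cons 2 x)) * H (cons 2 x) = C := by
    intro x
    rw [pot_cons_two, h2 _ (by rfl : cons 2 x ∈ cyl 2) _
      (by simp [cyl, ringPt] : ringPt 0 0 ∈ cyl 2), hC]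
    congr 2; ring
  refine ⟨?_, A, B, C, by have := hPos (ringPt 0 1); positivity,
    by have := hPos (ringPt 1 1); positivity, by have := hPos (ringPt 0 0); positivity,
    ?_, ?_, ?_, ?_, ?_⟩
  · have hp' := hE.eigenFun p
    rw [transfer_apply] at hp'
    have hle : ∀ x, Real.exp (β * pot α x) * H x ≤ H p := by
      intro x
      have he : Real.exp (β * pot α x) ≤ 1 :=
        Real.exp_le_one_iff.2 (mul_nonpos_of_nonneg_of_nonpos hβ.le (pot_nonpos hα.le x))
      calc Real.exp (β * pot α x) * H x ≤ 1 * H p :=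
            mul_le_mul he (hmax x) (hPos x).le zero_le_one
        _ = H p := one_mul _
    have h3 : Real.exp P * H p ≤ 3 * H p := by
      linarith [hle (cons 0 p), hle (cons 1 p), hle (cons 2 p)]
    exact le_of_mul_le_mul_right h3 (hPos p)
  · have hs := series_of_recursion (a := fun k => H (ringPt 0 (k + 1))) (K := B + C)
      hE.P_pos hβ.le (fun k => hbd _) (fun k => by
        have he := hE.eigenFun (ringPt 0 (k + 1))
        rw [transfer_apply, br1 _ (by simp [ringPt]), br2, cons_ringPt,
          pot_ring_zero α (by omega) (ringPt_mem (by decide) _)] at he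
        rw [← he, add_assoc]
        congr 3
        rw [one_div, inv_pow]; ring)
    rw [← hs, hA]
    have hx : Real.exp β * Real.exp (-(β / 2)) = Real.exp (β / 2) := by
      rw [← Real.exp_add]; congr 1; ring
    linear_combination Real.exp P * H (ringPt 0 1) * hx
  · have hs := series_of_recursion (a := fun k => H (ringPt 1 (k + 1))) (K := A + C)
      (b := 3 * β) hE.P_pos (by positivity) (fun k => hbd _) (fun k => by
        have he := hE.eigenFun (ringPt 1 (k + 1))
        rw [transfer_apply, br0 _ (by simp [ringPt]), br2, cons_ringPt,
          pot_ring_one α (by omega) (ringPt_mem (by decide) _)] at he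
        have hx : β * -(3 * (1 / 2 : ℝ) ^ (k + 1 + 1)) = -(3 * β / 2 ^ (k + 2)) := by
          rw [one_div, inv_pow]; ring
        rw [hx] at he
        linear_combination -he)
    rw [← hs, hB]
    have hx : Real.exp (3 * β) * Real.exp (-(3 * β / 2)) = Real.exp (3 * β / 2) := by
      rw [← Real.exp_add]; congr 1; ring
    linear_combination Real.exp P * H (ringPt 1 1) * hx
  · have he := hE.eigenFun (ringPt 0 0)
    rw [transfer_apply, br0 _ (by simp [ringPt]), br1 _ (by simp [ringPt]), br2] at he
    have hx : Real.exp (α * β) * Real.exp (-(α * β)) = 1 := by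
      rw [← Real.exp_add]; simp
    have hc : Real.exp (α * β) * C = H (ringPt 0 0) := by
      rw [hC]; linear_combination H (ringPt 0 0) * hx
    linear_combination Real.exp P * hc - he
  · have he := hE.eigenFun zeroSeq
    rw [transfer_apply, br1 _ (by simp [zeroSeq]), br2, cons_zeroSeq, pot_zeroSeq] at he
    simp only [mul_zero, Real.exp_zero] at he
    linear_combination -he
  · have he := hE.eigenFun oneSeq
    rw [transfer_apply, br0 _ (by simp [oneSeq]), br2, cons_oneSeq, pot_oneSeq] at he
    simp only [mul_zero, Real.exp_zero] at he
    linear_combination -he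

/-- The series `F(P, b)` in the scale `e^{2β}` that it has at the eigenvalue `e^P`. -/
def scaledF (P β b : ℝ) : ℝ := Ffun P b / (Real.exp P * Real.exp (2 * β))

/-- The weight `g = 1 / (e^P e^{αβ} - 1)`, for which `C = g (A + B)`. -/
def weight (α β P : ℝ) : ℝ := (Real.exp P * Real.exp (α * β) - 1)⁻¹

/-- The scalar characteristic equation in `x = scaledF P β β` and `y = scaledF P β (3β)`, together
with the ratio `H(0^∞) / H(1^∞)` and a priori bounds. -/
lemma characteristic {α β P : ℝ} {H : Sig → ℝ} {ν : Measure Sig} (hα : 0 < α) (hβ : 0 < β)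
    (hE : IsEigenData α β P H ν) (hRC : LocallyRingConstant H) {x y g : ℝ}
    (hx : x = scaledF P β β) (hy : y = scaledF P β (3 * β)) (hg : g = weight α β P) :
    Real.exp P ≤ 3 ∧ 0 < x ∧ x ≤ y ∧ y ≤ x + 3 * (β * Real.exp (-(1 / 2) * β)) ∧
      x * y + g * (x * Real.exp β + y * Real.exp (-β)) + 2 * g * (x * y) = 1 ∧
      Real.exp β * H zeroSeq / H oneSeq = (1 + y * Real.exp (-β)) / (Real.exp (-β) + x) ∧
      x * (Real.exp P - 1) ≤ Real.exp (-β) * Real.exp (-β)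
        + 2 * (β * Real.exp (-(1 / 2) * β)) := by
  obtain ⟨hP3, A, B, C, hA, hB, hC, h1, h2, h3, h4, h5⟩ := exists_scalars hα hβ hE hRC
  have hP := hE.P_pos
  have hlam : 1 < Real.exp P := by simpa using hP
  have hEpos := Real.exp_pos β
  have hE1 : 1 < Real.exp β := by simpa using hβ
  have hE2 : Real.exp (2 * β) = Real.exp β ^ 2 := by rw [← Real.exp_nat_mul]; norm_num
  have hE3 : Real.exp (3 * β) = Real.exp β ^ 3 := by rw [← Real.exp_nat_mul]; norm_num
  have hEn : Real.exp (-β) = (Real.exp β)⁻¹ := Real.exp_neg β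
  have hF1 : Ffun P β = x * (Real.exp P * Real.exp β ^ 2) := by
    rw [hx, scaledF, hE2]; field_simp
  have hF3 : Ffun P (3 * β) = y * (Real.exp P * Real.exp β ^ 2) := by
    rw [hy, scaledF, hE2]; field_simp
  have hD : 0 < Real.exp P * Real.exp β ^ 2 := by positivity
  set lam := Real.exp P
  set E := Real.exp β
  have hv : A = x * E * (B + C) := by
    have : lam * E * A = lam * E * (x * E * (B + C)) := by rw [h1, hF1]; ring
    exact mul_left_cancel₀ (by positivity) this
  have hu : B = y * E⁻¹ * (A + C) := by
    have : lam * E ^ 3 * B = lam * E ^ 3 * (y * E⁻¹ * (A + C)) := by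
      rw [hE3] at h2
      rw [h2, hF3]; field_simp
    exact mul_left_cancel₀ (by positivity) this
  have hq : 0 < lam * Real.exp (α * β) - 1 := by
    have : 0 < α * β := by positivity
    nlinarith [Real.one_lt_exp_iff.2 this]
  have hgC : C = g * (A + B) := by
    rw [hg, weight, ← h3]
    exact (inv_mul_cancel_left₀ hq.ne' C).symm
  have hxy : x ≤ y := by
    refine le_of_mul_le_mul_right ?_ hD
    rw [← hF1, ← hF3]
    exact Ffun_mono hP hβ.le (by linarith)
  have hx0 : 0 < x := by
    by_contra hneg
    have : x * E * (B + C) ≤ 0 := by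
      have hx' : x ≤ 0 := not_lt.1 hneg
      have : 0 ≤ E * (B + C) := by positivity
      nlinarith
    linarith
  -- The excess bound for `F(P, 3β)` is of order `e^{3β/2}`, smaller than the scale `e^{2β}` of `x`.
  have he3 : Real.exp (3 * β / 2) = E ^ 2 * Real.exp (-(1 / 2) * β) := by
    rw [← hE2, ← Real.exp_add]; congr 1; ring
  refine ⟨hP3, hx0, hxy, ?_, ?_, ?_, ?_⟩
  · have h := Ffun_le_add hP hβ.le (by linarith : β ≤ 3 * β)
    rw [hF1, hF3, he3] at h
    have hw : 0 < β * Real.exp (-(1 / 2) * β) := by positivity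
    refine le_of_mul_le_mul_right (h.trans ?_) hD
    have : 0 ≤ (lam - 1) * (3 * (β * Real.exp (-(1 / 2) * β)) * E ^ 2) :=
      mul_nonneg (by linarith) (by positivity)
    nlinarith
  · rw [hEn]
    have hEE : E * E⁻¹ = 1 := mul_inv_cancel₀ hEpos.ne'
    have huv : x * y = (x * E) * (y * E⁻¹) := by linear_combination -x * y * hEE
    rw [huv]
    set v := x * E
    set u := y * E⁻¹
    refine mul_left_cancel₀ hC.ne' ?_
    have e1 : A * (1 - u * v) = v * C * (1 + u) := by linear_combination hv + v * hu
    have e2 : B * (1 - u * v) = u * C * (1 + v) := by linear_combination hu + u * hv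
    linear_combination -(1 - v * u) * hgC - g * e1 - g * e2
  · have hlam0 : lam - 1 ≠ 0 := by linarith
    have hz : H zeroSeq = (B + C) / (lam - 1) := by rw [← h4]; field_simp
    have ho : H oneSeq = (A + C) / (lam - 1) := by rw [← h5]; field_simp
    have hv' : (B + C) * (1 + x * E) = A + B + C := by linear_combination -hv
    have hu' : (A + C) * (1 + y * E⁻¹) = A + B + C := by linear_combination -hu
    have hAC : A + C ≠ 0 := by positivity
    have hEi : 0 < E⁻¹ := by positivity
    have hden : E⁻¹ + x ≠ 0 := by positivity
    have hq1 : E * H zeroSeq / H oneSeq = E * (B + C) / (A + C) := by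
      rw [hz, ho]; field_simp
    rw [hq1, hEn, div_eq_div_iff hAC hden]
    have hEE : E * E⁻¹ = 1 := mul_inv_cancel₀ hEpos.ne'
    linear_combination hv' - hu' + (B + C) * hEE
  · have h := Ffun_le_add hP le_rfl hβ.le
    have hz := Ffun_zero hP
    have heh : Real.exp (β / 2) ≤ E ^ 2 * Real.exp (-(1 / 2) * β) := by
      rw [← he3]; exact Real.exp_le_exp.2 (by linarith)
    have hb : Ffun P β * (lam - 1) ≤ lam + 2 * lam * (β * (E ^ 2 * Real.exp (-(1 / 2) * β))) := by
      have hl : 0 ≤ lam - 1 := by linarith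
      have hw : 0 ≤ β * (E ^ 2 * Real.exp (-(1 / 2) * β)) := by positivity
      have h' : Ffun P β ≤ Ffun P 0 + β * (E ^ 2 * Real.exp (-(1 / 2) * β)) :=
        h.trans (by gcongr)
      calc Ffun P β * (lam - 1)
          ≤ (Ffun P 0 + β * (E ^ 2 * Real.exp (-(1 / 2) * β))) * (lam - 1) := by gcongr
        _ = lam + (lam - 1) * (β * (E ^ 2 * Real.exp (-(1 / 2) * β))) := by
            rw [add_mul, hz]; ring
        _ ≤ _ := by
            have : 0 ≤ (lam + 1) * (β * (E ^ 2 * Real.exp (-(1 / 2) * β))) :=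
              mul_nonneg (by linarith) hw
            linarith
    rw [hF1] at hb
    refine le_of_mul_le_mul_right ?_ hD
    rw [hEn]
    have hEE : E⁻¹ * E⁻¹ * (lam * E ^ 2) = lam := by field_simp
    calc x * (lam - 1) * (lam * E ^ 2) = x * (lam * E ^ 2) * (lam - 1) := by ring
      _ ≤ _ := hb
      _ = _ := by rw [add_mul, hEE]; ring

/-! ### Asymptotics as `β → +∞` -/

lemma tendsto_mul_exp_half :
    Tendsto (fun β : ℝ => β * Real.exp (-(1 / 2) * β)) atTop (𝓝 0) := by
  simpa using tendsto_rpow_mul_exp_neg_mul_atTop_nhds_zero 1 (1 / 2) (by norm_num)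

lemma weight_bounds {α β P : ℝ} (hα : 0 < α) (hβ : 0 < β) (hP : 0 < P) :
    0 < weight α β P ∧ weight α β P ≤ (Real.exp (α * β) - 1)⁻¹ := by
  have h1 : 1 < Real.exp (α * β) := Real.one_lt_exp_iff.2 (by positivity)
  have h2 : 1 < Real.exp P := Real.one_lt_exp_iff.2 hP
  have h3 : Real.exp (α * β) - 1 ≤ Real.exp P * Real.exp (α * β) - 1 := by nlinarith
  have h4 : 0 < Real.exp (α * β) - 1 := by linarith
  exact ⟨inv_pos.2 (h4.trans_le h3), inv_anti₀ h4 h3⟩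

section Limits

variable {α : ℝ} {P : ℝ → ℝ} {H : ℝ → Sig → ℝ} {ν : ℝ → Measure Sig}

lemma tendsto_weight (hα : 0 < α) (hP : ∀ β > (0 : ℝ), 0 < P β) :
    Tendsto (fun β => weight α β (P β)) atTop (𝓝 0) := by
  have hlim : Tendsto (fun β : ℝ => (Real.exp (α * β) - 1)⁻¹) atTop (𝓝 0) :=
    tendsto_inv_atTop_zero.comp (tendsto_atTop_add_const_right _ (-1)
      (Real.tendsto_exp_atTop.comp (tendsto_id.const_mul_atTop hα)))
  refine squeeze_zero' ?_ ?_ hlim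
  · filter_upwards [eventually_gt_atTop 0] with β hβ using (weight_bounds hα hβ (hP β hβ)).1.le
  · filter_upwards [eventually_gt_atTop 0] with β hβ using (weight_bounds hα hβ (hP β hβ)).2

/-- The product bound `x y ≤ 1` read off from the characteristic equation. -/
lemma scaledF_le_one (hα : 0 < α)
    (hE : ∀ β > (0 : ℝ), IsEigenData α β (P β) (H β) (ν β))
    (hRC : ∀ β > (0 : ℝ), LocallyRingConstant (H β)) {β : ℝ} (hβ : 0 < β) :
    scaledF (P β) β β ≤ 1 ∧ scaledF (P β) β β * scaledF (P β) β (3 * β) ≤ 1 := by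
  obtain ⟨-, hx, hxy, -, heq, -, -⟩ := characteristic hα hβ (hE β hβ) (hRC β hβ) rfl rfl rfl
  have hg := (weight_bounds hα hβ (hE β hβ).P_pos).1
  set x := scaledF (P β) β β
  set y := scaledF (P β) β (3 * β)
  set g := weight α β (P β)
  have hy : 0 < y := hx.trans_le hxy
  have h1 : 0 < g * (x * Real.exp β + y * Real.exp (-β)) := by positivity
  have h2 : 0 < 2 * g * (x * y) := by positivity
  have h3 : x * y ≤ 1 := by linarith
  exact ⟨by nlinarith, h3⟩

/-- Since `y - x → 0` and `g → 0`, the characteristic equation degenerates to the quadratic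
equation `x² + (g e^β) x = 1`. -/
lemma tendsto_quadratic (hα : 0 < α)
    (hE : ∀ β > (0 : ℝ), IsEigenData α β (P β) (H β) (ν β))
    (hRC : ∀ β > (0 : ℝ), LocallyRingConstant (H β)) :
    Tendsto (fun β => scaledF (P β) β β ^ 2
      + weight α β (P β) * Real.exp β * scaledF (P β) β β) atTop (𝓝 1) := by
  have hd : Tendsto (fun β : ℝ => 3 * (β * Real.exp (-(1 / 2) * β))) atTop (𝓝 0) := by
    simpa using tendsto_mul_exp_half.const_mul 3
  have hg := tendsto_weight hα (fun β hβ => (hE β hβ).P_pos)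
  have hlow : Tendsto (fun β : ℝ => 1 - (3 * (β * Real.exp (-(1 / 2) * β))
      + weight α β (P β) * ((1 + 3 * (β * Real.exp (-(1 / 2) * β))) * Real.exp (-β) + 2)))
      atTop (𝓝 1) := by
    have h := (hd.add (hg.mul (((hd.const_add 1).mul
      Real.tendsto_exp_neg_atTop_nhds_zero).add_const 2))).const_sub 1
    simpa using h
  refine tendsto_of_tendsto_of_tendsto_of_le_of_le' hlow tendsto_const_nhds ?_ ?_
  all_goals
    filter_upwards [eventually_gt_atTop 0] with β hβ
    obtain ⟨-, hx, hxy, hyd, heq, -, -⟩ := characteristic hα hβ (hE β hβ) (hRC β hβ) rfl rfl rfl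
    have hgp := (weight_bounds hα hβ (hE β hβ).P_pos).1
    obtain ⟨hx1, hxy1⟩ := scaledF_le_one hα hE hRC hβ
    set x := scaledF (P β) β β
    set y := scaledF (P β) β (3 * β)
    set g := weight α β (P β)
    set δ := 3 * (β * Real.exp (-(1 / 2) * β))
    have hen := Real.exp_pos (-β)
    have hy : 0 < y := hx.trans_le hxy
    have hkey : x ^ 2 + g * Real.exp β * x
        = 1 - (x * (y - x) + g * (y * Real.exp (-β) + 2 * (x * y))) := by
      linear_combination heq
    rw [hkey]
  · have h1 : x * (y - x) ≤ δ := by nlinarith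
    have h2 : g * (y * Real.exp (-β) + 2 * (x * y)) ≤ g * ((1 + δ) * Real.exp (-β) + 2) := by
      have : y ≤ 1 + δ := by linarith
      have : y * Real.exp (-β) ≤ (1 + δ) * Real.exp (-β) := by gcongr
      exact mul_le_mul_of_nonneg_left (by linarith) hgp.le
    linarith
  · have h1 : 0 ≤ x * (y - x) := mul_nonneg hx.le (by linarith)
    have h2 : 0 ≤ g * (y * Real.exp (-β) + 2 * (x * y)) := by positivity
    linarith

/-- If `g e^β → γ`, then `x` tends to the positive root `r` of `r² + γ r = 1`, and the ratio of
the eigenfunction values tends to `1 / r`. -/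
lemma tendsto_ratio (hα : 0 < α)
    (hE : ∀ β > (0 : ℝ), IsEigenData α β (P β) (H β) (ν β))
    (hRC : ∀ β > (0 : ℝ), LocallyRingConstant (H β)) {γ r : ℝ} (hγ : 0 ≤ γ) (hr : 0 < r)
    (hroot : r ^ 2 + γ * r = 1)
    (hlim : Tendsto (fun β => weight α β (P β) * Real.exp β) atTop (𝓝 γ)) :
    Tendsto (fun β => Real.exp β * H β zeroSeq / H β oneSeq) atTop (𝓝 (1 / r)) := by
  have hq := tendsto_quadratic hα hE hRC
  have hbound : Tendsto (fun β => (|scaledF (P β) β β ^ 2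
      + weight α β (P β) * Real.exp β * scaledF (P β) β β - 1|
      + |weight α β (P β) * Real.exp β - γ|) / r) atTop (𝓝 0) := by
    have h := ((hq.sub_const 1).abs.add (hlim.sub_const γ).abs).div_const r
    simpa using h
  have hx : Tendsto (fun β => scaledF (P β) β β) atTop (𝓝 r) := by
    rw [tendsto_iff_dist_tendsto_zero]
    refine squeeze_zero' (Eventually.of_forall fun β => dist_nonneg) ?_ hbound
    filter_upwards [eventually_gt_atTop 0] with β hβ
    obtain ⟨-, hx, -⟩ := characteristic hα hβ (hE β hβ) (hRC β hβ) rfl rfl rfl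
    obtain ⟨hx1, -⟩ := scaledF_le_one hα hE hRC hβ
    set x := scaledF (P β) β β
    set G := weight α β (P β) * Real.exp β
    rw [Real.dist_eq, le_div_iff₀ hr]
    have hfac : (x - r) * (x + r + γ) = (x ^ 2 + G * x - 1) - (G - γ) * x := by
      linear_combination -hroot
    calc |x - r| * r ≤ |x - r| * (x + r + γ) := by gcongr; linarith
      _ = |(x - r) * (x + r + γ)| := by
          rw [abs_mul, abs_of_pos (show 0 < x + r + γ by linarith)]
      _ = |(x ^ 2 + G * x - 1) - (G - γ) * x| := by rw [hfac]
      _ ≤ |x ^ 2 + G * x - 1| + |(G - γ) * x| := abs_sub _ _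
      _ ≤ |x ^ 2 + G * x - 1| + |G - γ| := by
          rw [abs_mul, abs_of_pos hx]
          have := mul_le_mul_of_nonneg_left hx1 (abs_nonneg (G - γ))
          linarith
  have hy : Tendsto (fun β => scaledF (P β) β (3 * β)) atTop (𝓝 r) := by
    have hup : Tendsto (fun β => scaledF (P β) β β + 3 * (β * Real.exp (-(1 / 2) * β)))
        atTop (𝓝 r) := by
      simpa using hx.add (tendsto_mul_exp_half.const_mul 3)
    refine tendsto_of_tendsto_of_tendsto_of_le_of_le' hx hup ?_ ?_
    · filter_upwards [eventually_gt_atTop 0] with β hβ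
        using (characteristic hα hβ (hE β hβ) (hRC β hβ) rfl rfl rfl).2.2.1
    · filter_upwards [eventually_gt_atTop 0] with β hβ
        using (characteristic hα hβ (hE β hβ) (hRC β hβ) rfl rfl rfl).2.2.2.1
  have hen := Real.tendsto_exp_neg_atTop_nhds_zero
  have hR : Tendsto (fun β => (1 + scaledF (P β) β (3 * β) * Real.exp (-β))
      / (Real.exp (-β) + scaledF (P β) β β)) atTop (𝓝 (1 / r)) := by
    have h := ((hy.mul hen).const_add 1).div (hen.add hx) (by simpa using hr.ne')
    rwa [mul_zero, add_zero, zero_add] at h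
  refine hR.congr' ?_
  filter_upwards [eventually_gt_atTop 0] with β hβ
    using (characteristic hα hβ (hE β hβ) (hRC β hβ) rfl rfl rfl).2.2.2.2.2.1.symm

lemma tendsto_weight_exp_of_one_lt (hα : 1 < α) (hP : ∀ β > (0 : ℝ), 0 < P β) :
    Tendsto (fun β => weight α β (P β) * Real.exp β) atTop (𝓝 0) := by
  have h1 : Tendsto (fun β : ℝ => Real.exp ((α - 1) * β) - Real.exp (-β)) atTop atTop :=
    (Real.tendsto_exp_atTop.comp (tendsto_id.const_mul_atTop (sub_pos.2 hα))).atTop_add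
      Real.tendsto_exp_neg_atTop_nhds_zero.neg
  refine squeeze_zero' ?_ ?_ (tendsto_inv_atTop_zero.comp h1)
  · filter_upwards [eventually_gt_atTop 0] with β hβ
    have := (weight_bounds (by linarith) hβ (hP β hβ) : 0 < weight α β (P β) ∧ _).1
    positivity
  · filter_upwards [eventually_gt_atTop 0] with β hβ
    have h := (weight_bounds (by linarith) hβ (hP β hβ) : _ ∧ weight α β (P β) ≤ _).2
    have he : Real.exp ((α - 1) * β) - Real.exp (-β)
        = (Real.exp (α * β) - 1) * (Real.exp β)⁻¹ := by
      rw [← Real.exp_neg, sub_mul (Real.exp _), ← Real.exp_add, one_mul]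
      congr 2; ring
    simp only [Function.comp_apply, he, mul_inv, inv_inv]
    gcongr

/-- For `α = 1` the quadratic limit keeps `x` away from `0`, and then the value
`F(P, β) ≈ 1 / P` forces `e^P → 1`. -/
lemma tendsto_exp_pressure
    (hE : ∀ β > (0 : ℝ), IsEigenData 1 β (P β) (H β) (ν β))
    (hRC : ∀ β > (0 : ℝ), LocallyRingConstant (H β)) :
    Tendsto (fun β => Real.exp (P β)) atTop (𝓝 1) := by
  have hq := tendsto_quadratic one_pos hE hRC
  have hen := Real.tendsto_exp_neg_atTop_nhds_zero
  have hup : Tendsto (fun β : ℝ => 1 + 4 * (Real.exp (-β) * Real.exp (-β)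
      + 2 * (β * Real.exp (-(1 / 2) * β)))) atTop (𝓝 1) := by
    simpa using (((hen.mul hen).add (tendsto_mul_exp_half.const_mul 2)).const_mul 4).const_add 1
  refine tendsto_of_tendsto_of_tendsto_of_le_of_le' tendsto_const_nhds hup ?_ ?_
  · filter_upwards [eventually_gt_atTop 0] with β hβ
      using Real.one_le_exp (hE β hβ).P_pos.le
  · filter_upwards [eventually_gt_atTop 0, hq.eventually (lt_mem_nhds (show (3 / 4 : ℝ) < 1 by
      norm_num)), hen.eventually (gt_mem_nhds (show (0 : ℝ) < 1 / 2 by norm_num))] with β hβ h34 hhalf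
    obtain ⟨-, hx, -, -, -, -, hlam⟩ :=
      characteristic one_pos hβ (hE β hβ) (hRC β hβ) rfl rfl rfl
    obtain ⟨hx1, -⟩ := scaledF_le_one one_pos hE hRC hβ
    have hg := (weight_bounds one_pos hβ (hE β hβ).P_pos).2
    have hP1 : 1 < Real.exp (P β) := Real.one_lt_exp_iff.2 (hE β hβ).P_pos
    have hG : weight 1 β (P β) * Real.exp β ≤ 2 := by
      have hEb : 2 < Real.exp β := by
        rw [Real.exp_neg] at hhalf
        rw [← inv_lt_inv₀ (Real.exp_pos β) (by norm_num)]
        linarith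
      rw [one_mul] at hg
      calc weight 1 β (P β) * Real.exp β ≤ (Real.exp β - 1)⁻¹ * Real.exp β := by gcongr
        _ ≤ 2 := by
          rw [inv_mul_le_iff₀ (by linarith)]
          linarith
    set x := scaledF (P β) β β
    set G := weight 1 β (P β) * Real.exp β
    have hx4 : 1 / 4 ≤ x := by nlinarith
    nlinarith

lemma tendsto_weight_exp_one
    (hE : ∀ β > (0 : ℝ), IsEigenData 1 β (P β) (H β) (ν β))
    (hRC : ∀ β > (0 : ℝ), LocallyRingConstant (H β)) :
    Tendsto (fun β => weight 1 β (P β) * Real.exp β) atTop (𝓝 1) := by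
  have h : Tendsto (fun β => (Real.exp (P β) - Real.exp (-β))⁻¹) atTop (𝓝 1) := by
    simpa using ((tendsto_exp_pressure hE hRC).sub
      Real.tendsto_exp_neg_atTop_nhds_zero).inv₀ (by norm_num)
  refine h.congr fun β => ?_
  have he : Real.exp (P β) - Real.exp (-β)
      = (Real.exp (P β) * Real.exp (1 * β) - 1) * (Real.exp β)⁻¹ := by
    rw [Real.exp_neg, one_mul, sub_mul, mul_assoc, mul_inv_cancel₀ (Real.exp_pos β).ne']
    ring
  rw [he, weight, mul_inv, inv_inv]

/-- For `α < 1` the term `g x e^β ≤ 1` of the characteristic equation forces `x → 0`. -/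
lemma tendsto_ratio_atTop (hα : 0 < α) (hα1 : α < 1)
    (hE : ∀ β > (0 : ℝ), IsEigenData α β (P β) (H β) (ν β))
    (hRC : ∀ β > (0 : ℝ), LocallyRingConstant (H β)) :
    Tendsto (fun β => Real.exp β * H β zeroSeq / H β oneSeq) atTop atTop := by
  have hlow : Tendsto (fun β : ℝ => Real.exp ((1 - α) * β) / 4) atTop atTop :=
    (Real.tendsto_exp_atTop.comp
      (tendsto_id.const_mul_atTop (sub_pos.2 hα1))).atTop_div_const (by norm_num)
  refine tendsto_atTop_mono' _ ?_ hlow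
  filter_upwards [eventually_gt_atTop 0] with β hβ
  obtain ⟨hP3, hx, hxy, -, heq, hR, -⟩ :=
    characteristic hα hβ (hE β hβ) (hRC β hβ) rfl rfl rfl
  have hg := (weight_bounds hα hβ (hE β hβ).P_pos).1
  have hginv : (weight α β (P β))⁻¹ ≤ 3 * Real.exp (α * β) := by
    rw [weight, inv_inv]
    nlinarith [Real.exp_pos (α * β)]
  rw [hR]
  set x := scaledF (P β) β β
  set y := scaledF (P β) β (3 * β)
  set g := weight α β (P β)
  have hy : 0 < y := hx.trans_le hxy
  have hen := Real.exp_pos (-β)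
  have h1 : g * (x * Real.exp β) ≤ 1 := by
    have : 0 < x * y := by positivity
    have : 0 < g * (y * Real.exp (-β)) := by positivity
    have : 0 < 2 * g * (x * y) := by positivity
    linarith
  have h2 : x * Real.exp β ≤ 3 * Real.exp (α * β) :=
    le_trans (by rw [← one_div, le_div_iff₀ hg]; linarith) hginv
  have h3 : 1 ≤ Real.exp (α * β) := Real.one_le_exp (by positivity)
  have hsplit : Real.exp ((1 - α) * β) * Real.exp (α * β) = Real.exp β := by
    rw [← Real.exp_add]; congr 1; ring
  have hinv : Real.exp (-β) * Real.exp β = 1 := by rw [← Real.exp_add]; simp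
  have hx' : Real.exp (-β) + x ≤ 4 * Real.exp (α * β) * Real.exp (-β) := by
    refine le_of_mul_le_mul_right ?_ (Real.exp_pos β)
    rw [add_mul, hinv, mul_assoc, hinv]
    linarith
  rw [le_div_iff₀ (by positivity)]
  calc Real.exp ((1 - α) * β) / 4 * (Real.exp (-β) + x)
      ≤ Real.exp ((1 - α) * β) / 4 * (4 * Real.exp (α * β) * Real.exp (-β)) := by gcongr
    _ = 1 := by linear_combination Real.exp (-β) * hsplit + hinv
    _ ≤ 1 + y * Real.exp (-β) := by
        have : 0 < y * Real.exp (-β) := by positivity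
        linarith

end Limits

/-- Limit of `e^β·H_β(0^∞)/H_β(1^∞)`: `1` if `α > 1`, `(1+√5)/2` if `α = 1`, `+∞` if
`0 < α < 1`. -/
theorem eigenfunction_ratio_limit (α : ℝ)
    (P : ℝ → ℝ) (H : ℝ → Sig → ℝ) (ν : ℝ → Measure Sig)
    (hE : ∀ β > (0 : ℝ), IsEigenData α β (P β) (H β) (ν β))
    (hRC : ∀ β > (0 : ℝ), LocallyRingConstant (H β)) :
    (1 < α → Tendsto (fun β => Real.exp β * H β zeroSeq / H β oneSeq) atTop (nhds 1)) ∧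
    (α = 1 → Tendsto (fun β => Real.exp β * H β zeroSeq / H β oneSeq) atTop
      (nhds ((1 + Real.sqrt 5) / 2))) ∧
    (0 < α → α < 1 →
      Tendsto (fun β => Real.exp β * H β zeroSeq / H β oneSeq) atTop atTop) := by
  refine ⟨fun hα => ?_, fun hα => ?_, fun h0 h1 => tendsto_ratio_atTop h0 h1 hE hRC⟩
  · have h := tendsto_ratio (one_pos.trans hα) hE hRC (γ := 0) (r := 1) le_rfl one_pos
      (by norm_num) (tendsto_weight_exp_of_one_lt hα fun β hβ => (hE β hβ).P_pos)
    simpa using h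
  · subst hα
    have h5 : Real.sqrt 5 ^ 2 = 5 := Real.sq_sqrt (by norm_num)
    have h1 : 1 < Real.sqrt 5 := by
      rw [Real.lt_sqrt] <;> norm_num
    have h := tendsto_ratio one_pos hE hRC (γ := 1) (r := (Real.sqrt 5 - 1) / 2) zero_le_one
      (by linarith) (by linear_combination h5 / 4) (tendsto_weight_exp_one hE hRC)
    have he : 1 / ((Real.sqrt 5 - 1) / 2) = (1 + Real.sqrt 5) / 2 := by
      rw [div_eq_iff (by linarith)]
      linear_combination -h5 / 4
    rwa [he] at h

end
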